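/- arXiv:1202.6578 — 2 statements merged into one kernel-verified Lean document; each statement's English description precedes it below -/
import Mathlib

section
/- For an additive subgroup H of ℝ, let ∼_H be the relation on ℝ³ × ℝ defined by (x̄, t) ∼_H (ȳ, s) ⟺ s − t ∈ H. Then H ↦ ∼_H is a bijection from the set of proper additive subgroups H of ℝ (i.e., H ≠ ℝ) onto the set of nontrivial 𝒢-invariant equivalence relations on ℝ³ × ℝ, and the equivalence class of any point (x̄, t) under ∼_H is {(ȳ, s) : s − t ∈ H} = (x̄, t) + (ℝ³ × H). -/
/-- A 3×3 real matrix is in SO(3) iff it is orthogonal with determinant 1. -/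
def IsSO3 (S : Matrix (Fin 3) (Fin 3) ℝ) : Prop :=
  S.transpose * S = 1 ∧ S.det = 1

/-- A relation on `ℝ³ × ℝ` is invariant under the Galilei group `𝒢` (the group of
maps `(x̄, t) ↦ (S x̄ + t w̄ + b̄, t + b⁴)` with `S ∈ SO(3)`, `w̄ ∈ ℝ³`) if it is
preserved by all these maps. -/
def IsGalileiInvariant (r : ((Fin 3 → ℝ) × ℝ) → ((Fin 3 → ℝ) × ℝ) → Prop) : Prop :=
  ∀ S : Matrix (Fin 3) (Fin 3) ℝ, IsSO3 S → ∀ w : Fin 3 → ℝ,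
    ∀ b : (Fin 3 → ℝ) × ℝ, ∀ p q : (Fin 3 → ℝ) × ℝ, r p q →
      r (S.mulVec p.1 + p.2 • w + b.1, p.2 + b.2)
        (S.mulVec q.1 + q.2 • w + b.1, q.2 + b.2)

theorem aux_so3 (a b : ℝ) (h : a * a + b * b = 1) : IsSO3 !![a, -b, 0; b, a, 0; 0, 0, 1] := by
  constructor
  · ext i j
    fin_cases i <;> fin_cases j <;>
      simp [Matrix.mul_apply, Fin.sum_univ_three] <;> linarith
  · simp [Matrix.det_fin_three]; linarith

theorem aux_so3_diag : IsSO3 !![1, 0, 0; 0, -1, 0; 0, 0, -1] := by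
  constructor
  · ext i j
    fin_cases i <;> fin_cases j <;>
      simp [Matrix.mul_apply, Fin.sum_univ_three]
  · simp [Matrix.det_fin_three]

theorem aux_so3_cyc : IsSO3 !![0, 1, 0; 0, 0, 1; 1, 0, 0] := by
  constructor
  · ext i j
    fin_cases i <;> fin_cases j <;>
      simp [Matrix.mul_apply, Fin.sum_univ_three]
  · simp [Matrix.det_fin_three]

theorem aux_one : IsSO3 1 := by
  constructor <;> simp

theorem aux_full (V : AddSubgroup (Fin 3 → ℝ))
    (hV : ∀ S, IsSO3 S → ∀ v ∈ V, S.mulVec v ∈ V) (v : Fin 3 → ℝ) (hv : v ∈ V) (h0 : v ≠ 0)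
    (u : Fin 3 → ℝ) : u ∈ V := by
  have hcyc : ∀ x y z : ℝ, ![x, y, z] ∈ V → ![y, z, x] ∈ V := by
    intro x y z h
    convert hV _ aux_so3_cyc _ h using 1
    ext i
    fin_cases i <;> simp [Matrix.mulVec, dotProduct, Fin.sum_univ_three]
  have hdiag : ∀ x y z : ℝ, ![x, y, z] ∈ V → ![2 * x, 0, 0] ∈ V := by
    intro x y z h
    convert V.add_mem h (hV _ aux_so3_diag _ h) using 1
    ext i
    fin_cases i <;> simp [Matrix.mulVec, dotProduct, Fin.sum_univ_three]
    ring
  have hrot : ∀ a c : ℝ, |a| ≤ 1 → ![c, 0, 0] ∈ V → ![2 * (a * c), 0, 0] ∈ V := by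
    intro a c ha h
    have h1 : 0 ≤ 1 - a * a := by
      have := abs_le.mp ha
      nlinarith
    have h2 := Real.mul_self_sqrt h1
    have h3 := hV _ (aux_so3 a (Real.sqrt (1 - a * a)) (by linarith)) _ h
    apply hdiag (a * c) (Real.sqrt (1 - a * a) * c) 0
    convert h3 using 1
    ext i
    fin_cases i <;> simp [Matrix.mulVec, dotProduct, Fin.sum_univ_three]
  have hline : ∀ c : ℝ, c ≠ 0 → ![c, 0, 0] ∈ V → ∀ t : ℝ, ![t, 0, 0] ∈ V := by
    intro c hc h t
    obtain ⟨n, hn⟩ := exists_nat_gt |t / (2 * c)|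
    have hn0 : (0 : ℝ) < n := lt_of_le_of_lt (abs_nonneg _) hn
    have h1 := hrot (t / (2 * c) / n) c (by
      rw [abs_div, abs_of_pos hn0, div_le_one hn0]; exact hn.le) h
    convert V.nsmul_mem h1 n using 1
    ext i
    fin_cases i <;> simp
    field_simp
  have hex : ∃ c : ℝ, c ≠ 0 ∧ ![c, 0, 0] ∈ V := by
    have e : v = ![v 0, v 1, v 2] := by
      ext i; fin_cases i <;> rfl
    have hv' := hv
    rw [e] at hv'
    by_contra hcon
    push Not at hcon
    apply h0
    have k0 : v 0 = 0 := by
      by_contra hne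
      exact hcon _ (mul_ne_zero two_ne_zero hne) (hdiag _ _ _ hv')
    have k1 : v 1 = 0 := by
      by_contra hne
      exact hcon _ (mul_ne_zero two_ne_zero hne) (hdiag _ _ _ (hcyc _ _ _ hv'))
    have k2 : v 2 = 0 := by
      by_contra hne
      exact hcon _ (mul_ne_zero two_ne_zero hne) (hdiag _ _ _ (hcyc _ _ _ (hcyc _ _ _ hv')))
    ext i
    fin_cases i
    · exact k0
    · exact k1
    · exact k2
  obtain ⟨c, hc, hcV⟩ := hex
  have hl := hline c hc hcV
  have := V.add_mem (V.add_mem (hl (u 0)) (hcyc _ _ _ (hcyc _ _ _ (hl (u 1)))))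
    (hcyc _ _ _ (hl (u 2)))
  convert this using 1
  ext i
  fin_cases i <;> simp

theorem aux_surj (r : ((Fin 3 → ℝ) × ℝ) → ((Fin 3 → ℝ) × ℝ) → Prop)
    (he : Equivalence r) (hi : IsGalileiInvariant r)
    (hn : ¬ (∀ p q : (Fin 3 → ℝ) × ℝ, r p q → p = q)) :
    ∃ H : AddSubgroup ℝ, ∀ p q, r p q ↔ q.2 - p.2 ∈ H := by
  have htr : ∀ b p q, r p q → r (p + b) (q + b) := by
    intro b p q h
    have := hi 1 aux_one 0 b p q h
    simp only [Matrix.one_mulVec, smul_zero, add_zero] at this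
    exact this
  let K : AddSubgroup ((Fin 3 → ℝ) × ℝ) :=
    { carrier := {a | r 0 a}
      zero_mem' := he.refl 0
      add_mem' := by
        intro a b ha hb
        have h1 := htr b 0 a ha
        rw [zero_add] at h1
        exact he.trans hb h1
      neg_mem' := by
        intro a ha
        have h1 := htr (-a) 0 a ha
        rw [zero_add, add_neg_cancel] at h1
        exact he.symm h1 }
  have hK : ∀ p q, r p q ↔ q - p ∈ K := by
    intro p q
    constructor
    · intro h
      have h1 := htr (-p) p q h
      rw [add_neg_cancel, ← sub_eq_add_neg] at h1
      exact h1
    · intro h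
      have h1 := htr p 0 (q - p) h
      rwa [zero_add, sub_add_cancel] at h1
  have hG : ∀ S, IsSO3 S → ∀ w v s, (v, s) ∈ K → (S.mulVec v + s • w, s) ∈ K := by
    intro S hS w v s h
    have h1 := hi S hS w 0 0 (v, s) h
    have h2 := (hK _ _).1 h1
    simpa using h2
  have hfull : ∀ u : Fin 3 → ℝ, (u, (0 : ℝ)) ∈ K := by
    push Not at hn
    obtain ⟨p, q, hpq, hne⟩ := hn
    have hm := (hK _ _).1 hpq
    have hne' : q - p ≠ 0 := fun h => hne (sub_eq_zero.1 h).symm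
    generalize q - p = d at hm hne'
    obtain ⟨v, s⟩ := d
    intro u
    by_cases hs : s = 0
    · subst hs
      refine aux_full (K.comap (AddMonoidHom.inl (Fin 3 → ℝ) ℝ)) ?_ v hm ?_ u
      · intro S hS v hv
        have := hG S hS 0 v 0 hv
        simpa using this
      · rintro rfl
        exact hne' rfl
    · have h1 := K.sub_mem (hG 1 aux_one (s⁻¹ • u) v s hm) hm
      simpa [smul_smul, hs] using h1
  refine ⟨K.comap (AddMonoidHom.inr (Fin 3 → ℝ) ℝ), fun p q => ?_⟩
  rw [hK]
  change _ ↔ ((0 : Fin 3 → ℝ), q.2 - p.2) ∈ K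
  have e : q - p = (q.1 - p.1, (0 : ℝ)) + ((0 : Fin 3 → ℝ), q.2 - p.2) := by
    ext <;> simp
  rw [e]
  exact K.add_mem_cancel_left (hfull _)

/-- `H ↦ ((x̄,t) ∼ (ȳ,s) ↔ s - t ∈ H)` is a bijection from the proper additive
subgroups of `ℝ` onto the nontrivial Galilei-invariant equivalence relations on
`ℝ³ × ℝ`; the class of `(x̄, t)` is `{(ȳ, s) | s - t ∈ H} = (x̄, t) + ℝ³ × H`. -/
theorem galilei_invariant_equivalences :
    Set.BijOn
      (fun H : AddSubgroup ℝ =>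
        fun p q : (Fin 3 → ℝ) × ℝ => q.2 - p.2 ∈ H)
      {H : AddSubgroup ℝ | H ≠ ⊤}
      {r : ((Fin 3 → ℝ) × ℝ) → ((Fin 3 → ℝ) × ℝ) → Prop |
        Equivalence r ∧ IsGalileiInvariant r ∧
        ¬ (∀ p q : (Fin 3 → ℝ) × ℝ, r p q) ∧
        ¬ (∀ p q : (Fin 3 → ℝ) × ℝ, r p q → p = q)} ∧
    ∀ (H : AddSubgroup ℝ) (p : (Fin 3 → ℝ) × ℝ),
      {q : (Fin 3 → ℝ) × ℝ | q.2 - p.2 ∈ H} =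
        {q : (Fin 3 → ℝ) × ℝ | ∃ v : (Fin 3 → ℝ) × ℝ, v.2 ∈ H ∧ q = p + v} := by
  refine ⟨⟨?_, ?_, ?_⟩, ?_⟩
  · intro H hH
    refine ⟨⟨fun p => by simp, fun {p q} h => by simpa using H.neg_mem h, ?_⟩, ?_, ?_, ?_⟩
    · intro p q s h1 h2
      simpa using H.add_mem h2 h1
    · intro S _ w b p q h
      simpa using h
    · intro h
      apply hH
      rw [AddSubgroup.eq_top_iff']
      intro s
      simpa using h (0, 0) (0, s)
    · intro h
      have h1 := h (0, 0) (1, 0) (by simp)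
      have h2 := congrFun (congrArg Prod.fst h1) 0
      simp at h2
  · intro H _ H' _ h
    ext s
    have h1 := congrFun (congrFun h (0, 0)) (0, s)
    simpa using h1
  · rintro r ⟨he, hi, ht, hn⟩
    obtain ⟨H, hH⟩ := aux_surj r he hi hn
    refine ⟨H, ?_, ?_⟩
    · rintro rfl
      exact ht fun p q => (hH p q).2 trivial
    · funext p q
      exact propext (hH p q).symm
  · intro H p
    ext q
    constructor
    · intro h
      exact ⟨q - p, h, by simp⟩
    · rintro ⟨v, hv, rfl⟩
      simpa using hv
end

section
/- Let u ∈ ℝ⁴ be a future timelike vector, let H(u) be the group of proper orthochronous Lorentz transformations B with Bu = u, let G_u be the group of affine maps x ↦ Bx + b with B ∈ H(u), b ∈ ℝ⁴, and let CG_u be the group of affine maps x ↦ μ B x + b with μ > 0, B ∈ H(u), b ∈ ℝ⁴. Then: (A) an equivalence relation ∼ on ℝ⁴ is G_u-invariant if and only if there exists an additive subgroup H of ℝ such that either (i) x ∼ y ⟺ y − x ∈ {h u : h ∈ H}, or (ii) x ∼ y ⟺ y − x ∈ {w + h u : g_c(w, u) = 0, h ∈ H}; (B) the standard simultaneity relation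 R_u is the only nontrivial CG_u-invariant equivalence relation on ℝ⁴ that is not the worldline relation x ∼ y ⟺ ∃ s ∈ ℝ, y − x = s u. -/
noncomputable section

/-- Spacetime `ℝ⁴`, identified with `ℝ³ × ℝ`. -/
abbrev V4 : Type := (Fin 3 → ℝ) × ℝ

/-- The Minkowski form `g_c(x, y) = x̄ ⬝ ȳ - c² x⁴ y⁴`. -/
def mink (c : ℝ) (x y : V4) : ℝ := (∑ i, x.1 i * y.1 i) - c ^ 2 * x.2 * y.2

/-- A vector is future timelike if `g_c(u, u) < 0` and `u⁴ > 0`. -/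
def FutureTimelike (c : ℝ) (u : V4) : Prop := mink c u u < 0 ∧ 0 < u.2

/-- A linear map is a Lorentz transformation if it preserves the Minkowski form. -/
def IsLorentz (c : ℝ) (B : V4 →ₗ[ℝ] V4) : Prop :=
  ∀ x y : V4, mink c (B x) (B y) = mink c x y

/-- A linear map is orthochronous if it maps future timelike vectors to future
timelike vectors. -/
def IsOrthochronous (c : ℝ) (B : V4 →ₗ[ℝ] V4) : Prop :=
  ∀ u : V4, FutureTimelike c u → FutureTimelike c (B u)

/-- A linear map is proper if its determinant is 1. -/
def IsProper (B : V4 →ₗ[ℝ] V4) : Prop := LinearMap.det B = 1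

/-- The standard simultaneity relation determined by a future timelike vector `u`:
`x R_u y ↔ g_c(x - y, u) = 0`. -/
def Rstd (c : ℝ) (u : V4) (x y : V4) : Prop := mink c (x - y) u = 0

/-- Invariance under `G_u`, the group of affine maps `x ↦ Bx + b` whose linear part
is a proper orthochronous Lorentz transformation fixing `u`. -/
def IsGuInvariant (c : ℝ) (u : V4) (r : V4 → V4 → Prop) : Prop :=
  ∀ B : V4 →ₗ[ℝ] V4, IsLorentz c B → IsOrthochronous c B → IsProper B → B u = u →
    ∀ b : V4, ∀ x y : V4, r x y → r (B x + b) (B y + b)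

/-- Invariance under `CG_u`, the group of affine maps `x ↦ μ B x + b` with `μ > 0`
and `B` a proper orthochronous Lorentz transformation fixing `u`. -/
def IsCGuInvariant (c : ℝ) (u : V4) (r : V4 → V4 → Prop) : Prop :=
  ∀ μ : ℝ, 0 < μ →
    ∀ B : V4 →ₗ[ℝ] V4, IsLorentz c B → IsOrthochronous c B → IsProper B → B u = u →
      ∀ b : V4, ∀ x y : V4, r x y → r (μ • B x + b) (μ • B y + b)

lemma mink_comm' (c : ℝ) (x y : V4) : mink c x y = mink c y x := by
  simp only [mink, Fin.sum_univ_three]; ring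

lemma mink_add_left (c : ℝ) (x y z : V4) : mink c (x + y) z = mink c x z + mink c y z := by
  simp only [mink, Fin.sum_univ_three, Prod.fst_add, Prod.snd_add, Pi.add_apply]; ring

lemma mink_smul_left (c a : ℝ) (x z : V4) : mink c (a • x) z = a * mink c x z := by
  simp only [mink, Fin.sum_univ_three, Prod.smul_fst, Prod.smul_snd, Pi.smul_apply, smul_eq_mul]
  ring

lemma mink_add_right (c : ℝ) (x y z : V4) : mink c z (x + y) = mink c z x + mink c z y := by
  simp only [mink, Fin.sum_univ_three, Prod.fst_add, Prod.snd_add, Pi.add_apply]; ring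

lemma mink_smul_right (c a : ℝ) (x z : V4) : mink c z (a • x) = a * mink c z x := by
  simp only [mink, Fin.sum_univ_three, Prod.smul_fst, Prod.smul_snd, Pi.smul_apply, smul_eq_mul]
  ring

lemma mink_neg_left (c : ℝ) (x z : V4) : mink c (-x) z = - mink c x z := by
  have := mink_smul_left c (-1) x z
  simpa using this

lemma mink_sub_left (c : ℝ) (x y z : V4) : mink c (x - y) z = mink c x z - mink c y z := by
  rw [sub_eq_add_neg, mink_add_left, mink_neg_left]; ring

/-- The functional `x ↦ g_c(x, p)`. -/
def minkL (c : ℝ) (p : V4) : V4 →ₗ[ℝ] ℝ where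
  toFun x := mink c x p
  map_add' x y := mink_add_left c x y p
  map_smul' a x := mink_smul_left c a x p

lemma minkL_apply (c : ℝ) (p x : V4) : minkL c p x = mink c x p := rfl

/-- Reflection in the hyperplane orthogonal to `p`. -/
def refl4 (c : ℝ) (p : V4) : V4 →ₗ[ℝ] V4 :=
  LinearMap.transvection ((-2 / mink c p p) • minkL c p) p

lemma refl4_apply (c : ℝ) (p x : V4) :
    refl4 c p x = x + (-2 / mink c p p * mink c x p) • p := by
  simp [refl4, LinearMap.transvection.apply, minkL_apply]

lemma refl4_lorentz (c : ℝ) (p : V4) (hp : mink c p p ≠ 0) : IsLorentz c (refl4 c p) := by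
  intro x y
  simp only [refl4_apply, mink_add_left, mink_add_right, mink_smul_left, mink_smul_right]
  rw [mink_comm' c p y]
  field_simp
  ring

lemma refl4_det (c : ℝ) (p : V4) (hp : mink c p p ≠ 0) : LinearMap.det (refl4 c p) = -1 := by
  rw [refl4, LinearMap.transvection.det]
  simp only [LinearMap.smul_apply, minkL_apply, smul_eq_mul]
  field_simp
  norm_num

/-- The half-turn about `p` in the rest space of `u`. -/
def half4 (c : ℝ) (u p : V4) : V4 →ₗ[ℝ] V4 := -(refl4 c p ∘ₗ refl4 c u)

lemma half4_det (c : ℝ) (u p : V4) (hu : mink c u u ≠ 0) (hp : mink c p p ≠ 0) :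
    LinearMap.det (half4 c u p) = 1 := by
  have h : half4 c u p = (-1 : ℝ) • (refl4 c p ∘ₗ refl4 c u) := by
    refine LinearMap.ext fun x => ?_
    rw [half4, LinearMap.neg_apply, LinearMap.smul_apply]
    module
  rw [h, LinearMap.det_smul, LinearMap.det_comp, refl4_det c p hp, refl4_det c u hu]
  simp
  norm_num

lemma half4_lorentz (c : ℝ) (u p : V4) (hu : mink c u u ≠ 0) (hp : mink c p p ≠ 0) :
    IsLorentz c (half4 c u p) := by
  intro x y
  simp only [half4, LinearMap.neg_apply, LinearMap.comp_apply]
  rw [mink_neg_left, mink_comm', mink_neg_left, mink_comm', neg_neg,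
    refl4_lorentz c p hp, refl4_lorentz c u hu]

lemma half4_u (c : ℝ) (u p : V4) (hu : mink c u u ≠ 0) (hpu : mink c p u = 0) :
    half4 c u p u = u := by
  have h1 : refl4 c u u = -u := by
    rw [refl4_apply]
    have : -2 / mink c u u * mink c u u = -2 := by field_simp
    rw [this]; module
  simp only [half4, LinearMap.neg_apply, LinearMap.comp_apply, h1, map_neg, neg_neg]
  rw [refl4_apply, mink_comm' c u p, hpu]; simp

lemma half4_perp (c : ℝ) (u p w : V4) (hw : mink c w u = 0) :
    half4 c u p w = -w + (2 / mink c p p * mink c w p) • p := by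
  simp only [half4, LinearMap.neg_apply, LinearMap.comp_apply]
  rw [refl4_apply c u w, hw]
  simp only [mul_zero, zero_smul, add_zero]
  rw [refl4_apply, neg_add, ← neg_smul]
  congr 2
  ring

lemma cs4 (x y : V4) : (∑ i, x.1 i * y.1 i) ^ 2 ≤ (∑ i, x.1 i * x.1 i) * (∑ i, y.1 i * y.1 i) := by
  have := Finset.sum_mul_sq_le_sq_mul_sq Finset.univ x.1 y.1
  simpa only [pow_two] using this

lemma sq_nonneg4 (x : V4) : 0 ≤ ∑ i, x.1 i * x.1 i :=
  Finset.sum_nonneg fun i _ => mul_self_nonneg _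

lemma mink_pos_of_perp {c : ℝ} (hc : 0 < c) {u : V4} (hu : FutureTimelike c u) {w : V4}
    (hw : mink c w u = 0) (h0 : w ≠ 0) : 0 < mink c w w := by
  obtain ⟨h1, h2⟩ := hu
  have hcs := cs4 w u
  have hw2 := sq_nonneg4 w
  have hu2 := sq_nonneg4 u
  simp only [mink] at *
  by_contra hneg
  have e : (∑ i, w.1 i * u.1 i) = c ^ 2 * w.2 * u.2 := by linarith
  rw [e] at hcs
  set W := ∑ i, w.1 i * w.1 i with hW
  set U := ∑ i, u.1 i * u.1 i
  have hcu : 0 < c ^ 2 * u.2 * u.2 := by positivity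
  -- W = 0
  have hW0 : W = 0 := by
    by_contra hne
    have hWpos : 0 < W := lt_of_le_of_ne hw2 (Ne.symm hne)
    have : W * U < W * (c ^ 2 * u.2 * u.2) := by
      apply mul_lt_mul_of_pos_left _ hWpos; linarith
    have h3 : W * (c ^ 2 * u.2 * u.2) ≤ (c ^ 2 * w.2 * w.2) * (c ^ 2 * u.2 * u.2) :=
      mul_le_mul_of_nonneg_right (by linarith) hcu.le
    nlinarith
  have hw1 : w.1 = 0 := by
    have := (Finset.sum_eq_zero_iff_of_nonneg (fun i _ => mul_self_nonneg (w.1 i))).1 hW0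
    funext i
    exact mul_self_eq_zero.1 (this i (Finset.mem_univ i))
  have hw4 : w.2 = 0 := by
    have : c ^ 2 * w.2 * u.2 = 0 := by rw [← e]; simp [hw1]
    have hc' := hc.ne'
    have hu' := h2.ne'
    simpa [hc', hu'] using this
  exact h0 (Prod.ext hw1 hw4)

lemma abs_lt4 {c : ℝ} (hc : 0 < c) {x y : V4} (hx : mink c x x < 0) (hy : mink c y y < 0) :
    |∑ i, x.1 i * y.1 i| < |c ^ 2 * x.2 * y.2| := by
  have hcs := cs4 x y
  have hw2 := sq_nonneg4 x
  have hu2 := sq_nonneg4 y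
  simp only [mink] at *
  apply sq_lt_sq.1
  set X := ∑ i, x.1 i * x.1 i
  set Y := ∑ i, y.1 i * y.1 i
  have : X * Y < (c ^ 2 * x.2 * x.2) * (c ^ 2 * y.2 * y.2) := by
    apply mul_lt_mul'' <;> linarith
  nlinarith

lemma ortho_of_fix {c : ℝ} (hc : 0 < c) {u : V4} (hu : FutureTimelike c u) {B : V4 →ₗ[ℝ] V4}
    (hB : IsLorentz c B) (hBu : B u = u) : IsOrthochronous c B := by
  intro x hx
  have h1 : mink c (B x) (B x) < 0 := by rw [hB]; exact hx.1
  refine ⟨h1, ?_⟩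
  have h2 : mink c (B x) u = mink c x u := by
    conv_lhs => rw [← hBu]
    exact hB x u
  have h3 := abs_lt4 hc hx.1 hu.1
  have h4 := abs_lt4 hc h1 hu.1
  have hu2 := hu.2
  have hx2 := hx.2
  rw [abs_of_pos (by positivity : 0 < c ^ 2 * x.2 * u.2)] at h3
  by_contra hneg
  push Not at hneg
  have : c ^ 2 * (B x).2 * u.2 ≤ 0 := by
    have : 0 ≤ c ^ 2 * (-(B x).2) * u.2 := by
      have : 0 ≤ -(B x).2 := by linarith
      positivity
    linarith
  rw [abs_of_nonpos this] at h4
  simp only [mink] at h2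
  have := (abs_lt.1 h3).2
  have := (abs_lt.1 h4).1
  linarith

lemma exists_perp (c : ℝ) (u d : V4) : ∃ m : V4, m ≠ 0 ∧ mink c m u = 0 ∧ mink c m d = 0 := by
  have h : LinearMap.ker ((minkL c u).prod (minkL c d)) ≠ ⊥ := by
    apply LinearMap.ker_ne_bot_of_finrank_lt
    simp
  obtain ⟨m, hm, h0⟩ := Submodule.exists_mem_ne_zero_of_ne_bot h
  rw [LinearMap.mem_ker] at hm
  have := Prod.ext_iff.1 hm
  exact ⟨m, h0, this.1, this.2⟩

/-- A subgroup invariant under half-turns containing a vector off the line of `u` contains the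
rest space. -/
lemma perp_sub {c : ℝ} (hc : 0 < c) {u : V4} (hu : FutureTimelike c u) (S : AddSubgroup V4)
    (hS : ∀ p, mink c p u = 0 → p ≠ 0 → ∀ v ∈ S, half4 c u p v ∈ S)
    (w : V4) (s : ℝ) (hw : mink c w u = 0) (hw0 : w ≠ 0) (hv : w + s • u ∈ S)
    (d : V4) (hd : mink c d u = 0) : d ∈ S := by
  have huu : mink c u u ≠ 0 := hu.1.ne
  have hww := mink_pos_of_perp hc hu hw hw0
  -- moving the perpendicular part
  have move : ∀ a b : V4, mink c a u = 0 → mink c b u = 0 → mink c a a = mink c b b →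
      a + b ≠ 0 → a + s • u ∈ S → b + s • u ∈ S := by
    intro a b ha hb hab hne hm
    have hpu : mink c (a + b) u = 0 := by rw [mink_add_left, ha, hb, add_zero]
    have hpp := mink_pos_of_perp hc hu hpu hne
    have h := hS (a + b) hpu hne _ hm
    rw [map_add, map_smul, half4_u c u _ huu hpu, half4_perp c u _ a ha] at h
    have e : 2 / mink c (a + b) (a + b) * mink c a (a + b) = 1 := by
      rw [div_mul_eq_mul_div, div_eq_one_iff_eq hpp.ne']
      simp only [mink_add_left, mink_add_right]
      rw [mink_comm' c b a, hab]; ring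
    rw [e] at h
    have e2 : -a + (1 : ℝ) • (a + b) + s • u = b + s • u := by module
    rwa [e2] at h
  -- small vectors
  have small : ∀ d : V4, mink c d u = 0 → mink c d d < 4 * mink c w w → d ∈ S := by
    intro d hd hlt
    obtain ⟨m, hm0, hmu, hmd⟩ := exists_perp c u d
    have hmm := mink_pos_of_perp hc hu hmu hm0
    set t := Real.sqrt ((mink c w w - mink c d d / 4) / mink c m m) with ht
    have hq : 0 < (mink c w w - mink c d d / 4) / mink c m m := by
      apply div_pos _ hmm; linarith
    have htpos : 0 < t := Real.sqrt_pos.2 hq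
    have htt : t * t * mink c m m = mink c w w - mink c d d / 4 := by
      rw [ht, Real.mul_self_sqrt hq.le]; field_simp
    have key : ∀ τ : ℝ, τ * τ = t * t → w + ((1 / 2 : ℝ) • d + τ • m) ≠ 0 → d ∈ S := by
      intro τ hτ hne
      have hτ0 : τ ≠ 0 := by
        rintro rfl
        have := mul_pos htpos htpos
        linarith
      have hau : mink c ((1 / 2 : ℝ) • d + τ • m) u = 0 := by
        simp [mink_add_left, mink_smul_left, hd, hmu]
      have hbu : mink c ((-1 / 2 : ℝ) • d + τ • m) u = 0 := by
        simp [mink_add_left, mink_smul_left, hd, hmu]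
      have hdm : mink c d m = 0 := by rw [mink_comm', hmd]
      have haa : mink c ((1 / 2 : ℝ) • d + τ • m) ((1 / 2 : ℝ) • d + τ • m) = mink c w w := by
        simp only [mink_add_left, mink_smul_left, mink_add_right, mink_smul_right, hmd, hdm]
        rw [← hτ] at htt
        linarith
      have hbb : mink c ((-1 / 2 : ℝ) • d + τ • m) ((-1 / 2 : ℝ) • d + τ • m) = mink c w w := by
        simp only [mink_add_left, mink_smul_left, mink_add_right, mink_smul_right, hmd, hdm]
        rw [← hτ] at htt
        linarith
      have h1 := move _ _ hw hau haa.symm hne hv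
      have h2 := move _ _ hau hbu (haa.trans hbb.symm) (by
        have : (1 / 2 : ℝ) • d + τ • m + ((-1 / 2 : ℝ) • d + τ • m) = (2 * τ) • m := by module
        rw [this]
        exact smul_ne_zero (by simpa using hτ0) hm0) h1
      have h3 := S.sub_mem h1 h2
      have e : (1 / 2 : ℝ) • d + τ • m + s • u - ((-1 / 2 : ℝ) • d + τ • m + s • u) = d := by
        module
      rwa [e] at h3
    by_cases h : w + ((1 / 2 : ℝ) • d + t • m) = 0
    · apply key (-t) (by ring)
      intro h'
      have : (2 * t) • m = 0 := by
        have e : (2 * t) • m = (w + ((1 / 2 : ℝ) • d + t • m)) - (w + ((1 / 2 : ℝ) • d + (-t) • m)) := by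
          module
        rw [e, h, h', sub_zero]
      exact smul_ne_zero (by simpa using htpos.ne') hm0 this
    · exact key t rfl h
  obtain ⟨N, hN⟩ := exists_nat_gt (mink c d d / (4 * mink c w w))
  rw [div_lt_iff₀ (by positivity)] at hN
  have hN1 : (0 : ℝ) < (N : ℝ) + 1 := by positivity
  have hsm : ((1 / ((N : ℝ) + 1)) • d) ∈ S := by
    apply small
    · rw [mink_smul_left, hd, mul_zero]
    · rw [mink_smul_left, mink_smul_right]
      have : 1 / ((N : ℝ) + 1) * (1 / ((N : ℝ) + 1) * mink c d d)
        = mink c d d / (((N : ℝ) + 1) * ((N : ℝ) + 1)) := by field_simp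
      rw [this, div_lt_iff₀ (by positivity)]
      have hN0 : (0 : ℝ) ≤ N := Nat.cast_nonneg N
      nlinarith [mul_nonneg hN0 hww.le, mul_nonneg (mul_nonneg hN0 hN0) hww.le]
  have := S.nsmul_mem hsm (N + 1)
  rw [← Nat.cast_smul_eq_nsmul ℝ, smul_smul] at this
  have e : ((N + 1 : ℕ) : ℝ) * (1 / ((N : ℝ) + 1)) = 1 := by
    push_cast; field_simp
  rwa [e, one_smul] at this

lemma decomp4 {c : ℝ} {u : V4} (hu : FutureTimelike c u) (v : V4) :
    ∃ (w : V4) (h : ℝ), mink c w u = 0 ∧ v = w + h • u := by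
  have huu : mink c u u ≠ 0 := hu.1.ne
  refine ⟨v - (mink c v u / mink c u u) • u, mink c v u / mink c u u, ?_, by module⟩
  rw [mink_sub_left, mink_smul_left]
  field_simp
  ring

lemma partA {c : ℝ} (hc : 0 < c) {u : V4} (hu : FutureTimelike c u) (r : V4 → V4 → Prop)
    (hr : Equivalence r) (hinv : IsGuInvariant c u r) :
    ∃ H : AddSubgroup ℝ,
          (∀ x y : V4, r x y ↔ ∃ h ∈ H, y - x = h • u) ∨
          (∀ x y : V4, r x y ↔
            ∃ (w : V4) (h : ℝ), mink c w u = 0 ∧ h ∈ H ∧ y - x = w + h • u) := by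
  have huu : mink c u u ≠ 0 := hu.1.ne
  have htr : ∀ b x y, r x y → r (x + b) (y + b) := by
    intro b x y h
    exact hinv LinearMap.id (fun _ _ => rfl) (fun _ h => h) LinearMap.det_id rfl b x y h
  let S : AddSubgroup V4 :=
    { carrier := {v | r 0 v}
      zero_mem' := hr.refl 0
      add_mem' := by
        intro a b ha hb
        have := htr a 0 b hb
        rw [zero_add, add_comm b a] at this
        exact hr.trans ha this
      neg_mem' := by
        intro a ha
        have := htr (-a) 0 a ha
        rw [zero_add, add_neg_cancel] at this
        exact hr.symm this }
  have memS : ∀ v, v ∈ S ↔ r 0 v := fun v => Iff.rfl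
  have rS : ∀ x y, r x y ↔ y - x ∈ S := by
    intro x y
    rw [memS]
    constructor
    · intro h
      have := htr (-x) x y h
      rwa [add_neg_cancel, ← sub_eq_add_neg] at this
    · intro h
      have := htr x _ _ h
      rwa [zero_add, sub_add_cancel] at this
  have hS : ∀ p, mink c p u = 0 → p ≠ 0 → ∀ v ∈ S, half4 c u p v ∈ S := by
    intro p hp hp0 v hv
    have hpp := (mink_pos_of_perp hc hu hp hp0).ne'
    have hL := half4_lorentz c u p huu hpp
    have hf := half4_u c u p huu hp
    have := hinv _ hL (ortho_of_fix hc hu hL hf) (half4_det c u p huu hpp) hf 0 0 v hv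
    simpa [memS] using this
  let H : AddSubgroup ℝ := S.comap ((LinearMap.toSpanSingleton ℝ V4 u).toAddMonoidHom)
  have memH : ∀ h, h ∈ H ↔ h • u ∈ S := fun h => Iff.rfl
  refine ⟨H, ?_⟩
  by_cases hline : ∀ v ∈ S, ∃ h : ℝ, v = h • u
  · left
    intro x y
    rw [rS]
    constructor
    · intro hv
      obtain ⟨h, e⟩ := hline _ hv
      exact ⟨h, by rwa [memH, ← e], e⟩
    · rintro ⟨h, hh, e⟩
      rw [e]; exact hh
  · right
    push Not at hline
    obtain ⟨v, hv, hne⟩ := hline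
    obtain ⟨w, s, hw, e⟩ := decomp4 hu v
    have hw0 : w ≠ 0 := by
      rintro rfl
      exact hne s (by rw [e, zero_add])
    have hsub := perp_sub hc hu S hS w s hw hw0 (e ▸ hv)
    intro x y
    rw [rS]
    constructor
    · intro hv
      obtain ⟨w, s, hw, e⟩ := decomp4 hu (y - x)
      refine ⟨w, s, hw, ?_, e⟩
      rw [memH]
      have := S.sub_mem hv (hsub w hw)
      rwa [e, add_sub_cancel_left] at this
    · rintro ⟨w, h, hw, hh, e⟩
      rw [e]
      exact S.add_mem (hsub w hw) hh

lemma partA_conv {c : ℝ} {u : V4} (r : V4 → V4 → Prop)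
    (h : ∃ H : AddSubgroup ℝ,
          (∀ x y : V4, r x y ↔ ∃ h ∈ H, y - x = h • u) ∨
          (∀ x y : V4, r x y ↔
            ∃ (w : V4) (h : ℝ), mink c w u = 0 ∧ h ∈ H ∧ y - x = w + h • u)) :
    IsGuInvariant c u r := by
  intro B hB _ _ hBu b x y hxy
  have e : B y + b - (B x + b) = B (y - x) := by rw [map_sub]; abel
  obtain ⟨H, h | h⟩ := h
  · rw [h] at hxy ⊢
    obtain ⟨k, hk, e'⟩ := hxy
    exact ⟨k, hk, by rw [e, e', map_smul, hBu]⟩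
  · rw [h] at hxy ⊢
    obtain ⟨w, k, hw, hk, e'⟩ := hxy
    refine ⟨B w, k, ?_, hk, by rw [e, e', map_add, map_smul, hBu]⟩
    have := hB w u
    rwa [hBu, hw] at this

lemma subgroup_cone (H : AddSubgroup ℝ) (h : ∀ μ : ℝ, 0 < μ → ∀ t ∈ H, μ * t ∈ H) :
    (∀ t ∈ H, t = 0) ∨ (∀ t, t ∈ H) := by
  by_cases h0 : ∀ t ∈ H, t = 0
  · exact Or.inl h0
  right
  push Not at h0
  obtain ⟨t, ht, hne⟩ := h0
  intro s
  have e : s = s / t * t := by field_simp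
  rcases lt_trichotomy (s / t) 0 with hs | hs | hs
  · have := H.neg_mem (h (-(s / t)) (by linarith) t ht)
    rw [e]; simpa using this
  · rw [e, hs, zero_mul]; exact H.zero_mem
  · rw [e]; exact h _ hs t ht

lemma partB {c : ℝ} (hc : 0 < c) {u : V4} (hu : FutureTimelike c u) (r : V4 → V4 → Prop)
    (hr : Equivalence r) (hinv : IsCGuInvariant c u r)
    (h1 : ¬ ∀ x y : V4, r x y) (h2 : ¬ ∀ x y : V4, r x y → x = y)
    (h3 : ¬ ∀ x y : V4, r x y ↔ ∃ s : ℝ, y - x = s • u) :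
    ∀ x y : V4, r x y ↔ Rstd c u x y := by
  have huu : mink c u u ≠ 0 := hu.1.ne
  have hu0 : u ≠ 0 := by
    rintro rfl
    exact lt_irrefl _ hu.2
  have hG : IsGuInvariant c u r := by
    intro B a1 a2 a3 a4 b x y h
    simpa using hinv 1 one_pos B a1 a2 a3 a4 b x y h
  have hsc : ∀ μ : ℝ, 0 < μ → ∀ v, r 0 v → r 0 (μ • v) := by
    intro μ hμ v h
    simpa using hinv μ hμ LinearMap.id (fun _ _ => rfl) (fun _ h => h) LinearMap.det_id rfl 0 0 v h
  obtain ⟨H, h | h⟩ := partA hc hu r hr hG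
  · exfalso
    have hmem : ∀ t, t ∈ H ↔ r 0 (t • u) := by
      intro t
      rw [h]
      constructor
      · intro ht; exact ⟨t, ht, by simp⟩
      · rintro ⟨k, hk, e⟩
        rw [sub_zero] at e
        rwa [smul_left_injective ℝ hu0 e]
    rcases subgroup_cone H (by
      intro μ hμ t ht
      rw [hmem] at ht ⊢
      rw [mul_smul]
      exact hsc μ hμ _ ht) with h0 | hall
    · apply h2
      intro x y hxy
      obtain ⟨k, hk, e⟩ := (h x y).1 hxy
      rw [h0 k hk, zero_smul] at e
      exact (sub_eq_zero.1 e).symm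
    · apply h3
      intro x y
      rw [h]
      exact ⟨fun ⟨k, _, e⟩ => ⟨k, e⟩, fun ⟨k, e⟩ => ⟨k, hall k, e⟩⟩
  · have hmem : ∀ t, t ∈ H ↔ r 0 (t • u) := by
      intro t
      rw [h]
      constructor
      · intro ht; exact ⟨0, t, by simp [mink], ht, by simp⟩
      · rintro ⟨w, k, hw, hk, e⟩
        rw [sub_zero] at e
        have := congrArg (fun z => mink c z u) e
        simp only [mink_add_left, mink_smul_left, hw, zero_add] at this
        rwa [mul_right_cancel₀ huu this]
    rcases subgroup_cone H (by
      intro μ hμ t ht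
      rw [hmem] at ht ⊢
      rw [mul_smul]
      exact hsc μ hμ _ ht) with h0 | hall
    · intro x y
      have e0 : Rstd c u x y ↔ mink c (y - x) u = 0 := by
        rw [Rstd, ← neg_sub y x, mink_neg_left, neg_eq_zero]
      rw [h, e0]
      constructor
      · rintro ⟨w, k, hw, hk, e⟩
        rw [e, h0 k hk, zero_smul, add_zero, hw]
      · intro hh
        exact ⟨y - x, 0, hh, H.zero_mem, by simp⟩
    · exfalso
      apply h1
      intro x y
      rw [h]
      obtain ⟨w, k, hw, e⟩ := decomp4 hu (y - x)
      exact ⟨w, k, hw, hall k, e⟩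

/-- (A) An equivalence relation on `ℝ⁴` is `G_u`-invariant iff, for some additive
subgroup `H` of `ℝ`, either (i) `x ∼ y ↔ y - x ∈ Hu`, or (ii)
`x ∼ y ↔ y - x ∈ ⟨u⟩^⊥ + Hu`.  (B) Standard simultaneity `R_u` is the only
nontrivial `CG_u`-invariant equivalence relation that is not the worldline relation
`x ∼ y ↔ ∃ s, y - x = s u`. -/
theorem isotropy_of_rest_invariant_equivalences (c : ℝ) (hc : 0 < c) (u : V4)
    (hu : FutureTimelike c u) :
    (∀ r : V4 → V4 → Prop, Equivalence r →
      (IsGuInvariant c u r ↔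
        ∃ H : AddSubgroup ℝ,
          (∀ x y : V4, r x y ↔ ∃ h ∈ H, y - x = h • u) ∨
          (∀ x y : V4, r x y ↔
            ∃ (w : V4) (h : ℝ), mink c w u = 0 ∧ h ∈ H ∧ y - x = w + h • u))) ∧
    (∀ r : V4 → V4 → Prop, Equivalence r → IsCGuInvariant c u r →
      (¬ ∀ x y : V4, r x y) → (¬ ∀ x y : V4, r x y → x = y) →
      (¬ ∀ x y : V4, r x y ↔ ∃ s : ℝ, y - x = s • u) →
      ∀ x y : V4, r x y ↔ Rstd c u x y) := by
  exact ⟨fun r hr => ⟨partA hc hu r hr, partA_conv r⟩,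
    fun r hr hinv h1 h2 h3 => partB hc hu r hr hinv h1 h2 h3⟩
end
end
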